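/- For every real ε > 0 and every integer k ≥ 1 there exists a constant C (depending only on ε and k) such that: for every finite undirected unweighted simple graph G on n vertices there is a subgraph H ⊆ G with at most C · n^(1 + 10kε + 1/(2^(k+1) − 1)) edges such that for every pair of vertices u, v connected in G, dist_H(u,v) ≤ dist_G(u,v) + 2^(30k/ε) · (dist_G(u,v))^(1 − 1/k). -/

import Mathlib

/-!
Fix `r` and start from a multiplicative spanner together with all edges at vertices of degree less
than `b`. Then the ends of any edge of `G` can be joined exactly at the cost of at most `1 / b` new
edges per vertex of the unit ball. Suppose that pairs at distance `r ^ i` can be joined with small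
surplus at a cost of `q` edges per vertex of a surrounding ball. Enlarge `H` until no subgraph of
`G` pays for its edges by serving enough new pairs; since only `n` units of coverage are available,
this adds few edges. Now divide a shortest path of length `r ^ (i + 1)` into `r` pieces. If filling
in all pieces is too expensive, then, as `H` is saturated, it already serves some pair near the two
ends of the path, which leaves two shorter parts of much smaller total weight. Iterating joins the
ends of the path at cost `2 ^ M * q ^ 2 / b` per ball vertex. The cost is therefore squared at every
level; for `b` slightly above `n ^ (1 / (2 ^ (k + 1) - 1))` it drops below `1 / n` at level `k`,
where pairs at distance `r ^ k` are joined with no new edge at all, with surplus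
`O(r ^ (k - 1))`. The spanner is the union of these graphs over the scales `r = 2 ^ j`.
-/

namespace SublinearSpanner

open scoped Finset

universe u

variable {V : Type u} {G H H' F : SimpleGraph V} {x' y' u v x y z : V}

/-- Closeness in a graph: `u` and `v` are at distance at most `L`. Unlike `G.dist u v ≤ L`, this
fails when `u` and `v` are not connected. -/
def Near (G : SimpleGraph V) (L : ℕ) (u v : V) : Prop :=
  G.edist u v ≤ L

namespace Near

variable {L L' : ℕ}

theorem refl (G : SimpleGraph V) (L : ℕ) (u : V) : Near G L u u := by
  simp [Near]

theorem symm (h : Near G L u v) : Near G L v u := by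
  rwa [Near, SimpleGraph.edist_comm]

theorem trans (h : Near G L x y) (h' : Near G L' y z) : Near G (L + L') x z := by
  rw [Near, Nat.cast_add]
  exact G.edist_triangle.trans (add_le_add h h')

theorem of_le (h : Near G L u v) (hL : L ≤ L') : Near G L' u v :=
  le_trans (b := (L : ℕ∞)) h (by exact_mod_cast hL)

theorem mono (h : Near G L u v) (hGH : G ≤ H) : Near H L u v :=
  (SimpleGraph.edist_anti hGH).trans h

theorem of_adj (h : G.Adj u v) : Near G 1 u v := by
  simp [Near, SimpleGraph.edist_eq_one_iff_adj.2 h]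

theorem of_walk (p : G.Walk u v) : Near G p.length u v :=
  SimpleGraph.edist_le p

theorem reachable (h : Near G L u v) : G.Reachable u v :=
  SimpleGraph.reachable_of_edist_ne_top (ne_top_of_le_ne_top (ENat.natCast_ne_top L) h)

theorem dist_le (h : Near G L u v) : G.dist u v ≤ L := by
  have hreach := h.reachable
  rw [Near, ← hreach.coe_dist_eq_edist] at h
  exact_mod_cast h

end Near

theorem near_zero_iff : Near G 0 u v ↔ u = v := by
  simp [Near]

theorem near_dist (h : G.Reachable u v) : Near G (G.dist u v) u v :=
  h.coe_dist_eq_edist.ge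

theorem Near.exists_walk {L : ℕ} (h : Near G L u v) : ∃ p : G.Walk u v, p.length ≤ L := by
  obtain ⟨p, hp⟩ := h.reachable.exists_walk_length_eq_dist
  exact ⟨p, hp.trans_le h.dist_le⟩

theorem near_succ_iff {L : ℕ} :
    Near G (L + 1) u v ↔ Near G L u v ∨ ∃ y, Near G L u y ∧ G.Adj y v := by
  constructor
  · intro h
    obtain ⟨p, hp⟩ := h.symm.exists_walk
    cases p with
    | nil => exact .inl (.refl G L u)
    | cons hadj p =>
      rw [SimpleGraph.Walk.length_cons] at hp
      exact .inr ⟨_, ((Near.of_walk p).of_le (by lia)).symm, hadj.symm⟩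
  · rintro (h | ⟨y, hy, hadj⟩)
    · exact h.of_le L.le_succ
    · exact hy.trans (.of_adj hadj)

/-- Surplus of a pair: the distance from `x` to `y` in `H` exceeds their distance in `G` by at
most `K`. -/
def SurplusLE (G H : SimpleGraph V) (K : ℕ) (x y : V) : Prop :=
  H.edist x y ≤ G.edist x y + K

namespace SurplusLE

variable {K K' : ℕ}

theorem refl (G H : SimpleGraph V) (K : ℕ) (x : V) : SurplusLE G H K x x := by
  simp [SurplusLE]

theorem symm (h : SurplusLE G H K x y) : SurplusLE G H K y x := by
  rwa [SurplusLE, H.edist_comm, G.edist_comm]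

theorem of_le (h : SurplusLE G H K x y) (hK : K ≤ K') : SurplusLE G H K' x y :=
  h.trans (by gcongr)

theorem mono (h : SurplusLE G H K x y) (hH : H ≤ H') : SurplusLE G H' K x y :=
  (SimpleGraph.edist_anti hH).trans h

theorem of_near (h : Near H K x y) : SurplusLE G H K x y :=
  le_trans (b := (K : ℕ∞)) h le_add_self

theorem of_adj (h : H.Adj x y) : SurplusLE G H 0 x y := by
  by_cases hxy : G.edist x y = 0
  · rw [SimpleGraph.edist_eq_zero_iff.1 hxy]
    exact .refl G H 0 y
  · rw [SurplusLE, SimpleGraph.edist_eq_one_iff_adj.2 h, Nat.cast_zero, add_zero]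
    exact Order.one_le_iff_pos.2 (pos_iff_ne_zero.2 hxy)

theorem near {L : ℕ} (h : SurplusLE G H K x y) (hG : Near G L x y) : Near H (L + K) x y := by
  rw [Near, Nat.cast_add]
  exact h.trans (by gcongr; exact hG)

theorem trans (h : SurplusLE G H K x y) (h' : SurplusLE G H K' y z)
    (hgeo : G.edist x y + G.edist y z = G.edist x z) : SurplusLE G H (K + K') x z :=
  calc H.edist x z ≤ H.edist x y + H.edist y z := H.edist_triangle
    _ ≤ (G.edist x y + K) + (G.edist y z + K') := add_le_add h h'
    _ = G.edist x z + (K + K' : ℕ) := by rw [← hgeo]; push_cast; abel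

end SurplusLE

/-- Multiplicative spanners: `H` joins the ends of every edge of `G` by a path of at most `t`
edges. That `H` is a subgraph of `G` is required separately. -/
def Spans (G H : SimpleGraph V) (t : ℕ) : Prop :=
  ∀ ⦃x y⦄, G.Adj x y → Near H t x y

namespace Spans

variable {t L : ℕ}

theorem mono (h : Spans G H t) (hH : H ≤ H') : Spans G H' t :=
  fun _ _ hxy => (h hxy).mono hH

theorem near (h : Spans G H t) (hxy : Near G L x y) : Near H (t * L) x y := by
  obtain ⟨p, hp⟩ := hxy.exists_walk
  suffices Near H (t * p.length) x y from this.of_le (by gcongr)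
  clear hp hxy
  induction p with
  | nil => exact .refl H _ _
  | cons hadj p ih => exact ((h hadj).trans ih).of_le (by rw [SimpleGraph.Walk.length_cons]; lia)

theorem surplusLE_of_near {K ρ : ℕ} (h : Spans G H t) (hx : Near G ρ x x') (hy : Near G ρ y y')
    (hxy : SurplusLE G H K x y) : SurplusLE G H (K + 2 * (t * ρ) + 2 * ρ) x' y' := by
  have hG : G.edist x y ≤ G.edist x' y' + (2 * ρ : ℕ) :=
    calc G.edist x y ≤ G.edist x x' + (G.edist x' y' + G.edist y' y) :=
          G.edist_triangle.trans (by gcongr; exact G.edist_triangle)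
      _ ≤ ρ + (G.edist x' y' + ρ) := by
          gcongr
          exacts [hx, hy.symm]
      _ = _ := by push_cast; ring
  calc H.edist x' y' ≤ H.edist x' x + (H.edist x y + H.edist y y') :=
        H.edist_triangle.trans (by gcongr; exact H.edist_triangle)
    _ ≤ (t * ρ : ℕ) + ((G.edist x' y' + (2 * ρ : ℕ) + K) + (t * ρ : ℕ)) := by
        gcongr
        exacts [h.near hx.symm, le_trans hxy (by gcongr), h.near hy]
    _ = _ := by push_cast; ring

end Spans

section EdgeCount

theorem ncard_edgeSet_sup_le (H F : SimpleGraph V) :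
    (H ⊔ F).edgeSet.ncard ≤ H.edgeSet.ncard + F.edgeSet.ncard := by
  rw [SimpleGraph.edgeSet_sup]
  exact Set.ncard_union_le _ _

theorem ncard_edgeSet_finset_sup_le {ι : Type*} (s : Finset ι) (F : ι → SimpleGraph V) :
    (s.sup F).edgeSet.ncard ≤ ∑ i ∈ s, (F i).edgeSet.ncard :=
  s.apply_sup_le_sum (f := fun F : SimpleGraph V => F.edgeSet.ncard) (by simp)
    @fun _ _ => ncard_edgeSet_sup_le _ _

theorem ncard_edgeSet_le_sum_card [Fintype V] (N : V → Finset V)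
    (hN : ∀ x y, H.Adj x y → y ∈ N x ∨ x ∈ N y) : H.edgeSet.ncard ≤ ∑ x, #(N x) := by
  classical
  have hcover : H.edgeSet ⊆ (Finset.univ.sigma N).image fun z => s(z.1, z.2) := by
    intro z hz
    induction z using Sym2.ind with
    | _ x y =>
      simp only [Finset.coe_image, Set.mem_image, Finset.mem_coe, Finset.mem_sigma,
        Finset.mem_univ, true_and]
      rcases hN x y hz with h | h
      · exact ⟨⟨x, y⟩, h, rfl⟩
      · exact ⟨⟨y, x⟩, h, Sym2.eq_swap⟩
  calc H.edgeSet.ncard ≤ #((Finset.univ.sigma N).image fun z => s(z.1, z.2)) := by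
        rw [← Set.ncard_coe_finset]
        exact Set.ncard_le_ncard hcover (Finset.finite_toSet _)
    _ ≤ #(Finset.univ.sigma N) := Finset.card_image_le
    _ = ∑ x, #(N x) := Finset.card_sigma _ _

theorem ncard_edgeSet_le_sq [Fintype V] (G : SimpleGraph V) :
    G.edgeSet.ncard ≤ Fintype.card V ^ 2 := by
  simpa [sq] using ncard_edgeSet_le_sum_card (H := G) (fun _ => Finset.univ) (by simp)

end EdgeCount

open Classical in
/-- The closed ball of radius `R` around `x`, as a finset; Mathlib's `SimpleGraph.ball` is the
open ball, as a set. -/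
noncomputable def closedBall [Fintype V] (G : SimpleGraph V) (R : ℕ) (x : V) : Finset V :=
  {y | Near G R x y}

section ClosedBall

variable [Fintype V] {R R' : ℕ}

@[simp]
theorem mem_closedBall : y ∈ closedBall G R x ↔ Near G R x y := by
  simp [closedBall]

theorem self_mem_closedBall : x ∈ closedBall G R x :=
  mem_closedBall.2 (.refl G R x)

theorem card_closedBall_pos : 0 < #(closedBall G R x) :=
  Finset.card_pos.2 ⟨x, self_mem_closedBall⟩

theorem closedBall_subset {L : ℕ} (h : Near G L x y) (hR : L + R ≤ R') :
    closedBall G R y ⊆ closedBall G R' x := fun _ hz =>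
  mem_closedBall.2 ((h.trans (mem_closedBall.1 hz)).of_le hR)

end ClosedBall

section Splitting

variable {M : Type*} [AddCommMonoid M] [LinearOrder M] {f : ℕ → M} {T : M} {a b : ℕ}

theorem exists_sum_Ico_le_lt_sum_Ico_succ_right (hT : 0 ≤ T) (h : T < ∑ j ∈ Finset.Ico a b, f j) :
    ∃ c, a ≤ c ∧ c < b ∧ ∑ j ∈ Finset.Ico a c, f j ≤ T ∧
      T < ∑ j ∈ Finset.Ico a (c + 1), f j := by
  induction b with
  | zero => exact absurd h (by simpa using hT.not_gt)
  | succ b ih =>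
    by_cases hb : T < ∑ j ∈ Finset.Ico a b, f j
    · obtain ⟨c, hac, hcb, hc⟩ := ih hb
      exact ⟨c, hac, hcb.trans b.lt_succ_self, hc⟩
    · have hab : a ≤ b := by
        by_contra! hba
        exact absurd h (by simpa [hba] using hT.not_gt)
      exact ⟨b, hab, b.lt_succ_self, not_lt.1 hb, h⟩

theorem exists_sum_Ico_succ_left_le_lt_sum_Ico (hT : 0 ≤ T) (h : T < ∑ j ∈ Finset.Ico a b, f j) :
    ∃ c, a ≤ c ∧ c < b ∧ ∑ j ∈ Finset.Ico (c + 1) b, f j ≤ T ∧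
      T < ∑ j ∈ Finset.Ico c b, f j := by
  obtain ⟨n, hlt, hle⟩ := Nat.exists_not_and_succ_of_not_zero_of_exists
    (p := fun n => ∑ j ∈ Finset.Ico (a + n) b, f j ≤ T) h.not_ge
    ⟨b, by simpa [Finset.Ico_eq_empty_of_le (b.le_add_left a)] using hT⟩
  refine ⟨a + n, a.le_add_right n, ?_, hle, not_le.1 hlt⟩
  by_contra! hb
  exact hlt (by simpa [Finset.Ico_eq_empty_of_le hb] using hT)

end Splitting

/-- A sequence of vertices lying in order along a shortest path of `G`. -/
def IsGeodesicSeq (G : SimpleGraph V) (p : ℕ → V) : Prop :=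
  ∀ ⦃i j k⦄, i ≤ j → j ≤ k → G.edist (p i) (p j) + G.edist (p j) (p k) = G.edist (p i) (p k)

/-- Along the sequence `p`, the detour from `p j` to `p (j + 1)` in `H` is reduced to surplus `e` by
adding the edges of `F j`, a subgraph of `G` with at most `q * w j` edges. -/
structure IsRepairFamily (G H : SimpleGraph V) (p : ℕ → V) (F : ℕ → SimpleGraph V) (e : ℕ)
    (q : ℝ) (w : ℕ → ℝ) : Prop where
  le (j : ℕ) : F j ≤ G
  ncard_le (j : ℕ) : ((F j).edgeSet.ncard : ℝ) ≤ q * w j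
  surplusLE (j : ℕ) : SurplusLE G (H ⊔ F j) e (p j) (p (j + 1))

namespace IsRepairFamily

variable {p : ℕ → V} {F : ℕ → SimpleGraph V} {e : ℕ} {q : ℝ} {w : ℕ → ℝ} {a b : ℕ}

theorem ncard_sup_le (h : IsRepairFamily G H p F e q w) (s : Finset ℕ) :
    ((s.sup F).edgeSet.ncard : ℝ) ≤ q * ∑ j ∈ s, w j :=
  calc ((s.sup F).edgeSet.ncard : ℝ) ≤ ∑ j ∈ s, ((F j).edgeSet.ncard : ℝ) :=
        mod_cast ncard_edgeSet_finset_sup_le s F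
    _ ≤ ∑ j ∈ s, q * w j := Finset.sum_le_sum fun j _ => h.ncard_le j
    _ = q * ∑ j ∈ s, w j := (Finset.mul_sum s w q).symm

theorem finset_sup_le (h : IsRepairFamily G H p F e q w) (s : Finset ℕ) : s.sup F ≤ G :=
  Finset.sup_le fun j _ => h.le j

theorem surplusLE_of_sup_le (h : IsRepairFamily G H p F e q w) (hp : IsGeodesicSeq G p)
    (hHF : H ⊔ (Finset.Ico a b).sup F ≤ H') {i j : ℕ} (hai : a ≤ i) (hij : i ≤ j) (hjb : j ≤ b) :
    SurplusLE G H' ((j - i) * e) (p i) (p j) := by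
  induction j, hij using Nat.le_induction with
  | base => exact .refl G H' _ _
  | succ j hij ih =>
    have hstep : H ⊔ F j ≤ H' :=
      le_trans (sup_le_sup_left (Finset.le_sup (f := F) (Finset.mem_Ico.2 ⟨by lia, by lia⟩)) H) hHF
    refine ((ih (by lia)).trans ((h.surplusLE j).mono hstep) (hp hij j.le_succ)).of_le ?_
    rw [Nat.succ_sub hij, Nat.succ_mul]

theorem surplusLE_of_near {r t ρ : ℕ}
    (h : IsRepairFamily G H p F e q w) (hp : IsGeodesicSeq G p) (hspan : Spans G H t)
    (hbr : b ≤ r) {i j : ℕ} (hi : i ∈ Finset.Ico a b) (hj : j ∈ Finset.Ico a b)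
    (hx : Near G ρ (p i) x) (hy : Near G ρ (p j) y) :
    SurplusLE G (H ⊔ (Finset.Ico a b).sup F) (r * e + 2 * (t * ρ) + 2 * ρ) x y := by
  wlog hij : i ≤ j generalizing i j x y
  · exact (this hj hi hy hx (le_of_not_ge hij)).symm
  have hpath := h.surplusLE_of_sup_le hp le_rfl (Finset.mem_Ico.1 hi).1 hij
    (Finset.mem_Ico.1 hj).2.le
  refine (hspan.mono le_sup_left).surplusLE_of_near hx hy (hpath.of_le ?_)
  have := (Finset.mem_Ico.1 hj).2
  gcongr
  lia

end IsRepairFamily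

/-- Every segment `p a, …, p b` whose weight lies between some `T ≥ W` and `N * T` has a pair
`p j`, `p l` joined in `H` with surplus `K`, such that the two parts of the segment outside
`p j, …, p l` have weight at most `T`. -/
def HasShortcuts (G H : SimpleGraph V) (p : ℕ → V) (w : ℕ → ℝ) (K : ℕ) (N W : ℝ) (m : ℕ) : Prop :=
  ∀ ⦃a b : ℕ⦄ ⦃T : ℝ⦄, b ≤ m → W ≤ T → T < ∑ j ∈ Finset.Ico a b, w j →
    ∑ j ∈ Finset.Ico a b, w j ≤ N * T →
    ∃ j l, a ≤ j ∧ j ≤ l ∧ l ≤ b ∧ ∑ i ∈ Finset.Ico a j, w i ≤ T ∧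
      ∑ i ∈ Finset.Ico l b, w i ≤ T ∧ SurplusLE G H K (p j) (p l)

-- Each of the `M` recursion levels divides the weight of a segment by `N` and splits it in two.
theorem IsRepairFamily.exists_repair_of_hasShortcuts {p : ℕ → V} {F : ℕ → SimpleGraph V}
    {e K m : ℕ} {q N W : ℝ} {w : ℕ → ℝ} (h : IsRepairFamily G H p F e q w)
    (hp : IsGeodesicSeq G p) (hshort : HasShortcuts G H p w K N W m) (hq : 0 ≤ q) (hW : 0 ≤ W)
    (hN : 1 ≤ N) (M : ℕ) {a b : ℕ} (hab : a ≤ b) (hbm : b ≤ m)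
    (hsum : ∑ j ∈ Finset.Ico a b, w j ≤ N ^ M * W) :
    ∃ S ≤ G, (S.edgeSet.ncard : ℝ) ≤ 2 ^ M * (q * W) ∧
      SurplusLE G (H ⊔ S) ((b - a) * e + (2 ^ M - 1) * K) (p a) (p b) := by
  induction M generalizing a b with
  | zero =>
    refine ⟨(Finset.Ico a b).sup F, h.finset_sup_le _, (h.ncard_sup_le _).trans ?_, ?_⟩
    · simpa using mul_le_mul_of_nonneg_left hsum hq
    · exact (h.surplusLE_of_sup_le hp le_rfl le_rfl hab le_rfl).of_le (Nat.le_add_right _ _)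
  | succ M ih =>
    have hpow : 2 ^ (M + 1) - 1 = 2 * (2 ^ M - 1) + 1 := by
      have := Nat.one_le_two_pow (n := M)
      lia
    by_cases hsmall : ∑ j ∈ Finset.Ico a b, w j ≤ N ^ M * W
    · obtain ⟨S, hSG, hcard, hsurplus⟩ := ih hab hbm hsmall
      refine ⟨S, hSG, hcard.trans ?_, hsurplus.of_le (by gcongr <;> lia)⟩
      have : 0 ≤ q * W := mul_nonneg hq hW
      gcongr
      · norm_num
      · lia
    obtain ⟨j, l, haj, hjl, hlb, hpre, hsuf, hshortcut⟩ := hshort hbm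
      (le_mul_of_one_le_left hW (one_le_pow₀ hN)) (not_le.1 hsmall)
      (by rwa [← mul_assoc, ← pow_succ'])
    obtain ⟨S₁, hS₁G, hcard₁, hsurplus₁⟩ := ih haj (by lia) hpre
    obtain ⟨S₂, hS₂G, hcard₂, hsurplus₂⟩ := ih hlb hbm hsuf
    refine ⟨S₁ ⊔ S₂, sup_le hS₁G hS₂G, ?_, ?_⟩
    · calc ((S₁ ⊔ S₂).edgeSet.ncard : ℝ) ≤ S₁.edgeSet.ncard + S₂.edgeSet.ncard :=
            mod_cast ncard_edgeSet_sup_le S₁ S₂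
        _ ≤ 2 ^ (M + 1) * (q * W) := by rw [pow_succ]; linarith
    · have hle₁ : H ⊔ S₁ ≤ H ⊔ (S₁ ⊔ S₂) := sup_le_sup_left le_sup_left H
      have hle₂ : H ⊔ S₂ ≤ H ⊔ (S₁ ⊔ S₂) := sup_le_sup_left le_sup_right H
      refine (((hsurplus₁.mono hle₁).trans (hshortcut.mono le_sup_left)
        (hp haj hjl)).trans (hsurplus₂.mono hle₂)
        (hp (haj.trans hjl) hlb)).of_le ?_
      have hlen : (j - a) * e + (b - l) * e ≤ (b - a) * e := by
        rw [← add_mul]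
        gcongr
        lia
      rw [hpow]
      linarith

section Geodesic

theorem edist_getVert_of_length_eq_dist (p : G.Walk u v) (hp : p.length = G.dist u v) {i j : ℕ}
    (hij : i ≤ j) (hjp : j ≤ p.length) : G.edist (p.getVert i) (p.getVert j) = (j - i : ℕ) := by
  have hnear : ∀ {i j}, i ≤ j → Near G (j - i) (p.getVert i) (p.getVert j) := by
    intro i j hij
    have hend : (p.drop i).getVert (j - i) = p.getVert j := by
      rw [SimpleGraph.Walk.drop_getVert, Nat.add_sub_cancel' hij]
    rw [← hend]
    exact (Near.of_walk ((p.drop i).take (j - i))).of_le (by simp [SimpleGraph.Walk.take_length])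
  refine le_antisymm (hnear hij) ?_
  have hreach := (hnear hij).reachable
  rw [← hreach.coe_dist_eq_edist, Nat.cast_le]
  have hstart : Near G i u (p.getVert i) := by simpa using hnear i.zero_le
  have hend : Near G (p.length - j) (p.getVert j) v := by simpa using hnear hjp
  have hdist := ((hstart.trans (near_dist hreach)).trans hend).dist_le
  lia

/-- A geodesic sequence whose consecutive points are at most `ℓ` apart, and exactly `ℓ` apart
before index `m - 1`: the usual division of a shortest path into `m` pieces. -/
structure IsGeodesicChain (G : SimpleGraph V) (ℓ m : ℕ) (p : ℕ → V) : Prop where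
  isGeodesicSeq : IsGeodesicSeq G p
  near_succ (j : ℕ) : Near G ℓ (p j) (p (j + 1))
  mul_le_edist {i j : ℕ} (hij : i ≤ j) (hj : j < m) :
    (((j - i) * ℓ : ℕ) : ℕ∞) ≤ G.edist (p i) (p j)

open Classical in
/-- The points at distance at most `ρ` from one of the points `p a`, `a ∈ A`. -/
noncomputable def tube [Fintype V] (G : SimpleGraph V) (ρ : ℕ) (p : ℕ → V) (A : Finset ℕ) :
    Finset V :=
  A.biUnion fun a => closedBall G ρ (p a)

theorem mem_tube [Fintype V] {ρ : ℕ} {p : ℕ → V} {A : Finset ℕ} :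
    x ∈ tube G ρ p A ↔ ∃ a ∈ A, Near G ρ (p a) x := by
  simp [tube]

theorem exists_isGeodesicChain {ℓ r : ℕ} (hℓ : 1 ≤ ℓ) (h : Near G (r * ℓ) u v) :
    ∃ m ≤ r, ∃ p, IsGeodesicChain G ℓ m p ∧ p 0 = u ∧ p m = v := by
  obtain ⟨w, hw⟩ := h.reachable.exists_walk_length_eq_dist
  have hlen : w.length ≤ r * ℓ := hw.trans_le h.dist_le
  have hm : ∃ m ≤ r, w.length ≤ m * ℓ ∧ ∀ j < m, j * ℓ ≤ w.length := by
    have hex : ∃ m, w.length ≤ m * ℓ := ⟨r, hlen⟩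
    exact ⟨Nat.find hex, Nat.find_min' hex hlen, Nat.find_spec hex,
      fun j hj => (not_le.1 (Nat.find_min hex hj)).le⟩
  obtain ⟨m, hmr, hmlen, hjlen⟩ := hm
  have hedist : ∀ {i j}, i ≤ j → G.edist (w.getVert (min (i * ℓ) w.length))
      (w.getVert (min (j * ℓ) w.length)) = (min (j * ℓ) w.length - min (i * ℓ) w.length : ℕ) :=
    fun hij => edist_getVert_of_length_eq_dist w hw (by gcongr) (min_le_right _ _)
  refine ⟨m, hmr, fun j => w.getVert (min (j * ℓ) w.length), ⟨?_, ?_, ?_⟩, by simp, by simp [hmlen]⟩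
  · intro i j k hij hjk
    rw [hedist hij, hedist hjk, hedist (hij.trans hjk), ← Nat.cast_add]
    have := Nat.mul_le_mul_right ℓ hij
    have := Nat.mul_le_mul_right ℓ hjk
    congr 1
    lia
  · intro j
    rw [Near, hedist j.le_succ, Nat.cast_le, Nat.succ_mul]
    lia
  · intro i j hij hj
    rw [hedist hij, min_eq_left (hjlen j hj), min_eq_left (hjlen i (hij.trans_lt hj)), Nat.sub_mul]

namespace IsGeodesicChain

variable {ℓ m : ℕ} {p : ℕ → V}

theorem near (h : IsGeodesicChain G ℓ m p) {i j : ℕ} (hij : i ≤ j) :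
    Near G ((j - i) * ℓ) (p i) (p j) := by
  induction j, hij using Nat.le_induction with
  | base => exact .refl G _ _
  | succ j hij ih => exact (ih.trans (h.near_succ j)).of_le (by rw [Nat.succ_sub hij, Nat.succ_mul])

theorem near_of_le (h : IsGeodesicChain G ℓ m p) {i j r : ℕ} (hi : i ≤ r) (hj : j ≤ r) :
    Near G (r * ℓ) (p i) (p j) := by
  wlog hij : i ≤ j generalizing i j
  · exact (this hj hi (le_of_not_ge hij)).symm
  · exact (h.near hij).of_le (by gcongr; lia)

variable [Fintype V] {c r : ℕ} {A B : Finset ℕ}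

-- A point lies in the balls around at most `2 * c + 1` consecutive chain points.
theorem sum_card_closedBall_le (h : IsGeodesicChain G ℓ m p) (hℓ : 1 ≤ ℓ) (hA : ∀ j ∈ A, j < m) :
    ∑ j ∈ A, #(closedBall G (c * ℓ) (p j)) ≤ (2 * c + 1) * #(tube G (c * ℓ) p A) := by
  classical
  have hfiber : ∀ x ∈ tube G (c * ℓ) p A,
      #{j ∈ A | x ∈ closedBall G (c * ℓ) (p j)} ≤ 2 * c + 1 := by
    intro x _
    set J := {j ∈ A | x ∈ closedBall G (c * ℓ) (p j)}
    obtain hempty | hne := J.eq_empty_or_nonempty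
    · simp [hempty]
    suffices J ⊆ Finset.Icc (J.min' hne) (J.min' hne + 2 * c) by
      have hcard := Finset.card_le_card this
      rw [Nat.card_Icc] at hcard
      lia
    intro j hj
    have hmin := J.min'_le j hj
    obtain ⟨-, hi⟩ := Finset.mem_filter.1 (J.min'_mem hne)
    obtain ⟨hjA, hj⟩ := Finset.mem_filter.1 hj
    have hnear := (mem_closedBall.1 hi).trans (mem_closedBall.1 hj).symm
    have hmul : (j - J.min' hne) * ℓ ≤ (2 * c) * ℓ := by
      have := (h.mul_le_edist hmin (hA j hjA)).trans hnear
      rw [Nat.cast_le] at this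
      linarith
    have := Nat.le_of_mul_le_mul_right hmul hℓ
    exact Finset.mem_Icc.2 ⟨hmin, by lia⟩
  calc ∑ j ∈ A, #(closedBall G (c * ℓ) (p j))
      = ∑ j ∈ A, #{x ∈ tube G (c * ℓ) p A | x ∈ closedBall G (c * ℓ) (p j)} := by
        refine Finset.sum_congr rfl fun j hj => congrArg Finset.card (Finset.ext fun x => ?_)
        rw [Finset.mem_filter, iff_and_self]
        exact fun hx => mem_tube.2 ⟨j, hj, mem_closedBall.1 hx⟩
    _ = ∑ x ∈ tube G (c * ℓ) p A, #{j ∈ A | x ∈ closedBall G (c * ℓ) (p j)} :=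
        Finset.sum_card_bipartiteAbove_eq_sum_card_bipartiteBelow _
    _ ≤ #(tube G (c * ℓ) p A) • (2 * c + 1) := Finset.sum_le_card_nsmul _ _ _ hfiber
    _ = (2 * c + 1) * #(tube G (c * ℓ) p A) := by rw [smul_eq_mul, mul_comm]

theorem near_of_mem_tube (h : IsGeodesicChain G ℓ m p) {ρ : ℕ} (hA : ∀ a ∈ A, a ≤ r)
    (hB : ∀ a ∈ B, a ≤ r) (hx : x ∈ tube G ρ p A) (hy : y ∈ tube G ρ p B) :
    Near G (2 * ρ + r * ℓ) x y := by
  obtain ⟨a, ha, hax⟩ := mem_tube.1 hx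
  obtain ⟨b, hb, hby⟩ := mem_tube.1 hy
  exact ((hax.symm.trans (h.near_of_le (hA a ha) (hB b hb))).trans hby).of_le (by lia)

theorem closedBall_subset_of_mem_tube (h : IsGeodesicChain G ℓ m p) {ρ R : ℕ}
    (hA : ∀ a ∈ A, a ≤ r) (hx : x ∈ tube G ρ p A) :
    closedBall G R x ⊆ closedBall G (r * ℓ + ρ + R) (p 0) := by
  obtain ⟨a, ha, hax⟩ := mem_tube.1 hx
  exact closedBall_subset ((h.near_of_le r.zero_le (hA a ha)).trans hax) le_rfl

end IsGeodesicChain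

end Geodesic

section Saturation

variable [Fintype V] {R K : ℕ} {β : ℝ}

open Classical in
/-- The points at distance at most `R` from `x` that `H` joins to `x` with surplus at most `K`. -/
noncomputable def servedBall (G : SimpleGraph V) (R K : ℕ) (H : SimpleGraph V) (x : V) :
    Finset V :=
  {y ∈ closedBall G R x | SurplusLE G H K x y}

theorem mem_servedBall : y ∈ servedBall G R K H x ↔ Near G R x y ∧ SurplusLE G H K x y := by
  simp [servedBall]

theorem servedBall_subset : servedBall G R K H x ⊆ closedBall G R x := fun _ hy =>
  mem_closedBall.2 (mem_servedBall.1 hy).1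

theorem servedBall_mono (h : H ≤ H') : servedBall G R K H x ⊆ servedBall G R K H' x := fun _ hy =>
  mem_servedBall.2 ⟨(mem_servedBall.1 hy).1, (mem_servedBall.1 hy).2.mono h⟩

/-- The potential of the amortized analysis: the sum over all `x` of the fraction of the ball of
radius `R` around `x` that `H` serves with surplus at most `K`. -/
noncomputable def coverage (G : SimpleGraph V) (R K : ℕ) (H : SimpleGraph V) : ℝ :=
  ∑ x, (#(servedBall G R K H x) : ℝ) / #(closedBall G R x)

theorem coverage_nonneg : 0 ≤ coverage G R K H :=
  Finset.sum_nonneg fun _ _ => by positivity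

theorem coverage_le_card : coverage G R K H ≤ Fintype.card V := by
  simpa [coverage] using Finset.sum_le_card_nsmul Finset.univ _ (1 : ℝ) fun x _ =>
    div_le_one_of_le₀ (mod_cast Finset.card_le_card servedBall_subset) (Nat.cast_nonneg _)

/-- Adding edges of `G` to `H` raises the coverage by at most `1 / β` per edge. -/
def IsSaturated (G : SimpleGraph V) (R K : ℕ) (β : ℝ) (H : SimpleGraph V) : Prop :=
  ∀ F ≤ G, β * coverage G R K (H ⊔ F) ≤ β * coverage G R K H + F.edgeSet.ncard

theorem exists_isSaturated (R K : ℕ) (hβ : 0 ≤ β) {H₀ : SimpleGraph V} (hH₀ : H₀ ≤ G) :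
    ∃ H, H₀ ≤ H ∧ H ≤ G ∧ IsSaturated G R K β H ∧
      (H.edgeSet.ncard : ℝ) ≤ H₀.edgeSet.ncard + Fintype.card V * β := by
  classical
  obtain ⟨H, ⟨hH₀H, hHG⟩, hmax⟩ := (Set.Icc H₀ G).exists_max_image
    (fun H => β * coverage G R K H - H.edgeSet.ncard) (Set.toFinite _) ⟨H₀, le_rfl, hH₀⟩
  refine ⟨H, hH₀H, hHG, fun F hF => ?_, ?_⟩
  · have hgain := hmax (H ⊔ F) ⟨le_sup_of_le_left hH₀H, sup_le hHG hF⟩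
    have hcard : ((H ⊔ F).edgeSet.ncard : ℝ) ≤ H.edgeSet.ncard + F.edgeSet.ncard :=
      mod_cast ncard_edgeSet_sup_le H F
    linarith
  · have hgain := hmax H₀ ⟨le_rfl, hH₀⟩
    have hupper : β * coverage G R K H ≤ β * Fintype.card V :=
      mul_le_mul_of_nonneg_left coverage_le_card hβ
    have hlower : 0 ≤ β * coverage G R K H₀ := mul_nonneg hβ coverage_nonneg
    linarith

variable {X Y : Finset V} {s : ℝ}

theorem coverage_add_le (hH : H ≤ H') (hR : ∀ x ∈ X, ∀ y ∈ Y, Near G R x y)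
    (hs : ∀ x ∈ X, (#(closedBall G R x) : ℝ) ≤ s) (hold : ∀ x ∈ X, ∀ y ∈ Y, ¬SurplusLE G H K x y)
    (hnew : ∀ x ∈ X, ∀ y ∈ Y, SurplusLE G H' K x y) :
    coverage G R K H + #X * #Y / s ≤ coverage G R K H' := by
  classical
  have hserved : ∀ x, #(servedBall G R K H x) + (if x ∈ X then #Y else 0) ≤
      #(servedBall G R K H' x) := by
    intro x
    split_ifs with hx
    · have hdisj : Disjoint (servedBall G R K H x) Y :=
        Finset.disjoint_right.2 fun y hy h => hold x hx y hy (mem_servedBall.1 h).2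
      rw [← Finset.card_union_of_disjoint hdisj]
      exact Finset.card_le_card (Finset.union_subset (servedBall_mono hH) fun y hy =>
        mem_servedBall.2 ⟨hR x hx y hy, hnew x hx y hy⟩)
    · simpa using Finset.card_le_card (servedBall_mono hH)
  have hgain : (#X * #Y / s : ℝ) ≤ ∑ x, (if x ∈ X then (#Y : ℝ) else 0) / #(closedBall G R x) :=
    calc (#X * #Y / s : ℝ) = ∑ _ ∈ X, (#Y : ℝ) / s := by
          rw [Finset.sum_const, nsmul_eq_mul, mul_div_assoc]
      _ ≤ ∑ x ∈ X, (#Y : ℝ) / #(closedBall G R x) := Finset.sum_le_sum fun x hx =>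
          div_le_div_of_nonneg_left (Nat.cast_nonneg _) (mod_cast card_closedBall_pos) (hs x hx)
      _ = _ := by simp [ite_div, Finset.sum_ite_mem]
  calc coverage G R K H + #X * #Y / s
      ≤ ∑ x, ((#(servedBall G R K H x) + if x ∈ X then (#Y : ℝ) else 0) /
          #(closedBall G R x)) := by
        simp only [add_div, Finset.sum_add_distrib]
        exact add_le_add le_rfl hgain
    _ ≤ coverage G R K H' := Finset.sum_le_sum fun x _ =>
        div_le_div_of_nonneg_right (by exact_mod_cast hserved x) (Nat.cast_nonneg _)

theorem IsSaturated.exists_surplusLE (h : IsSaturated G R K β H) (hβ : 0 ≤ β) {S : SimpleGraph V}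
    (hSG : S ≤ G) (hR : ∀ x ∈ X, ∀ y ∈ Y, Near G R x y)
    (hs : ∀ x ∈ X, (#(closedBall G R x) : ℝ) ≤ s)
    (hS : ∀ x ∈ X, ∀ y ∈ Y, SurplusLE G (H ⊔ S) K x y)
    (hcard : (S.edgeSet.ncard : ℝ) < β * (#X * #Y / s)) :
    ∃ x ∈ X, ∃ y ∈ Y, SurplusLE G H K x y := by
  by_contra! hnone
  have hgain := mul_le_mul_of_nonneg_left (coverage_add_le le_sup_left hR hs hnone hS) hβ
  have hsat := h S hSG
  linarith

end Saturation

section Step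

variable [Fintype V]

/-- Every pair at distance at most `ℓ` in `G` can be joined with surplus at most `e` after adding to
`H` a subgraph of `G` whose number of edges is at most `q` times the size of the ball of radius `R`
around the first vertex. -/
def Repairable (G H : SimpleGraph V) (ℓ e R : ℕ) (q : ℝ) : Prop :=
  ∀ ⦃u v⦄, Near G ℓ u v → ∃ F ≤ G, (F.edgeSet.ncard : ℝ) ≤ q * #(closedBall G R u) ∧
    SurplusLE G (H ⊔ F) e u v

variable {ℓ e m r c t K M : ℕ} {q b N T : ℝ} {p : ℕ → V} {F : ℕ → SimpleGraph V}

theorem Repairable.mono {R R' e' : ℕ} {q' : ℝ} (h : Repairable G H ℓ e R q) (he : e ≤ e')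
    (hR : R ≤ R') (hq : 0 ≤ q') (hqq' : q ≤ q') (hH : H ≤ H') : Repairable G H' ℓ e' R' q' := by
  intro u v huv
  obtain ⟨F, hFG, hcard, hsurplus⟩ := h huv
  refine ⟨F, hFG, hcard.trans ?_, (hsurplus.mono (sup_le_sup_right hH F)).of_le he⟩
  gcongr
  exact closedBall_subset (.refl G 0 u) (by lia)

theorem Repairable.exists_isRepairFamily {R : ℕ} (h : Repairable G H ℓ e R q)
    (hp : ∀ j, Near G ℓ (p j) (p (j + 1))) :
    ∃ F, IsRepairFamily G H p F e q fun j => #(closedBall G R (p j)) := by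
  choose F hFG hcard hsurplus using fun j => h (hp j)
  exact ⟨F, hFG, hcard, hsurplus⟩

-- Filling a segment of weight at most `N * T` costs less than saturation would pay for serving
-- the product of the two end windows `X` and `Y`, each of weight more than `T`.
theorem mul_lt_saturation_gain {s X Y d : ℝ} (hs : 0 < s) (hb : 0 < b) (hN : 0 < N)
    (hX : T < d * X) (hY : T < d * Y) (hT : 0 < T) (hW : q * s / b ≤ T) :
    q * (N * T) < b * N * d ^ 2 * (X * Y / s) :=
  calc q * (N * T) = (q * s / b) * T * (b * N / s) := by field_simp
    _ ≤ T * T * (b * N / s) := by gcongr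
    _ < (d * X) * (d * Y) * (b * N / s) := by gcongr
    _ = b * N * d ^ 2 * (X * Y / s) := by ring

theorem IsGeodesicChain.exists_window_pair (hp : IsGeodesicChain G ℓ m p) (hℓ : 1 ≤ ℓ)
    (hmr : m ≤ r) (hF : IsRepairFamily G H p F e q fun j => #(closedBall G (c * ℓ) (p j)))
    (hspan : Spans G H t) (hq : 0 < q) (hb : 0 < b) (hN : 0 < N)
    (hsat : IsSaturated G (2 * (c * ℓ) + r * ℓ) (r * e + 2 * (t * (c * ℓ)) + 2 * (c * ℓ))
      (b * N * (2 * c + 1) ^ 2) H)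
    {i j k l : ℕ} (hl : l ≤ m) (hji : j ≤ l) (hik : i ≤ k)
    (hW : q * #(closedBall G (3 * (c * ℓ) + 2 * (r * ℓ)) (p 0)) / b ≤ T)
    (hleft : T < ∑ a ∈ Finset.Ico i j, (#(closedBall G (c * ℓ) (p a)) : ℝ))
    (hright : T < ∑ a ∈ Finset.Ico k l, (#(closedBall G (c * ℓ) (p a)) : ℝ))
    (hsum : ∑ a ∈ Finset.Ico i l, (#(closedBall G (c * ℓ) (p a)) : ℝ) ≤ N * T) :
    ∃ a ∈ Finset.Ico i j, ∃ a' ∈ Finset.Ico k l,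
      SurplusLE G H (r * e + 4 * (t * (c * ℓ)) + 4 * (c * ℓ)) (p a) (p a') := by
  set s := (#(closedBall G (3 * (c * ℓ) + 2 * (r * ℓ)) (p 0)) : ℝ) with hs
  have hs0 : 0 < s := Nat.cast_pos.2 card_closedBall_pos
  have hT : 0 < T := lt_of_lt_of_le (by positivity) hW
  have hX : T < (2 * c + 1) * (#(tube G (c * ℓ) p (Finset.Ico i j)) : ℝ) :=
    hleft.trans_le (mod_cast hp.sum_card_closedBall_le hℓ (by grind))
  have hY : T < (2 * c + 1) * (#(tube G (c * ℓ) p (Finset.Ico k l)) : ℝ) :=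
    hright.trans_le (mod_cast hp.sum_card_closedBall_le hℓ (by grind))
  have hfill : (((Finset.Ico i l).sup F).edgeSet.ncard : ℝ) ≤ q * (N * T) :=
    (hF.ncard_sup_le _).trans (by gcongr)
  have hserved : ∀ x ∈ tube G (c * ℓ) p (Finset.Ico i j), ∀ y ∈ tube G (c * ℓ) p (Finset.Ico k l),
      SurplusLE G (H ⊔ (Finset.Ico i l).sup F) (r * e + 2 * (t * (c * ℓ)) + 2 * (c * ℓ)) x y := by
    intro x hx y hy
    obtain ⟨a, ha, hax⟩ := mem_tube.1 hx
    obtain ⟨a', ha', hay⟩ := mem_tube.1 hy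
    exact hF.surplusLE_of_near hp.isGeodesicSeq hspan (hl.trans hmr) (by grind) (by grind) hax hay
  have hball : ∀ x ∈ tube G (c * ℓ) p (Finset.Ico i j),
      (#(closedBall G (2 * (c * ℓ) + r * ℓ) x) : ℝ) ≤ s := by
    intro x hx
    rw [hs]
    gcongr
    exact (hp.closedBall_subset_of_mem_tube (r := r) (by grind) hx).trans
      (closedBall_subset (.refl G 0 _) (by lia))
  obtain ⟨x, hx, y, hy, hxy⟩ := hsat.exists_surplusLE (by positivity)
    (hF.finset_sup_le (Finset.Ico i l))
    (fun x hx y hy => hp.near_of_mem_tube (by grind) (by grind) hx hy) hball hserved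
    (hfill.trans_lt (mul_lt_saturation_gain hs0 hb hN hX hY hT hW))
  obtain ⟨a, ha, hax⟩ := mem_tube.1 hx
  obtain ⟨a', ha', hay⟩ := mem_tube.1 hy
  exact ⟨a, ha, a', ha', (hspan.surplusLE_of_near hax.symm hay.symm hxy).of_le (by lia)⟩

theorem IsGeodesicChain.hasShortcuts (hp : IsGeodesicChain G ℓ m p) (hℓ : 1 ≤ ℓ)
    (hmr : m ≤ r) (hF : IsRepairFamily G H p F e q fun j => #(closedBall G (c * ℓ) (p j)))
    (hspan : Spans G H t) (hq : 0 < q) (hb : 0 < b) (hN : 0 < N)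
    (hsat : IsSaturated G (2 * (c * ℓ) + r * ℓ) (r * e + 2 * (t * (c * ℓ)) + 2 * (c * ℓ))
      (b * N * (2 * c + 1) ^ 2) H) :
    HasShortcuts G H p (fun j => #(closedBall G (c * ℓ) (p j)))
      (r * e + 4 * (t * (c * ℓ)) + 4 * (c * ℓ) + t * ℓ) N
      (q * #(closedBall G (3 * (c * ℓ) + 2 * (r * ℓ)) (p 0)) / b) m := by
  intro i l T hlm hW hlt hsum
  have hT : 0 ≤ T := le_trans (by positivity) hW
  obtain ⟨j, -, hjl, hleft, hltj⟩ := exists_sum_Ico_le_lt_sum_Ico_succ_right hT hlt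
  obtain ⟨k, hik, -, hright, hltk⟩ := exists_sum_Ico_succ_left_le_lt_sum_Ico hT hlt
  have hsub : ∀ {a a' a₁ a₁' : ℕ}, a₁ ≤ a → a' ≤ a₁' →
      ∑ z ∈ Finset.Ico a a', (#(closedBall G (c * ℓ) (p z)) : ℝ) ≤
        ∑ z ∈ Finset.Ico a₁ a₁', (#(closedBall G (c * ℓ) (p z)) : ℝ) := fun h h' =>
    Finset.sum_le_sum_of_subset_of_nonneg (Finset.Ico_subset_Ico h h') fun _ _ _ =>
      Nat.cast_nonneg _
  obtain ⟨a, ha, a', ha', hsurplus⟩ := hp.exists_window_pair hℓ hmr hF hspan hq hb hN hsat hlm hjl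
    hik hW hltj hltk hsum
  rw [Finset.mem_Ico] at ha ha'
  have hprefix := (hsub le_rfl (Nat.lt_succ_iff.1 ha.2)).trans hleft
  obtain haa' | haa' := le_or_gt a a'
  · refine ⟨a, a' + 1, ha.1, by lia, ha'.2, hprefix, (hsub (by lia) le_rfl).trans hright, ?_⟩
    exact hsurplus.trans (.of_near (by simpa using hspan.near (hp.near_succ a')))
      (hp.isGeodesicSeq haa' a'.le_succ)
  · exact ⟨a, a, ha.1, le_rfl, by lia, hprefix, (hsub (by lia) le_rfl).trans hright, .refl G H _ _⟩

theorem Repairable.of_isSaturated (h : Repairable G H ℓ e (c * ℓ) q) (hspan : Spans G H t)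
    (hℓ : 1 ≤ ℓ) (hq : 0 < q) (hb : 0 < b) (hN : 1 ≤ N)
    (hNM : (2 * c + 1) * b / q ≤ N ^ M)
    (hsat : IsSaturated G (2 * (c * ℓ) + r * ℓ) (r * e + 2 * (t * (c * ℓ)) + 2 * (c * ℓ))
      (b * N * (2 * c + 1) ^ 2) H) :
    Repairable G H (r * ℓ) (2 ^ M * (r * e + 4 * (t * (c * ℓ)) + 4 * (c * ℓ) + t * ℓ))
      (3 * (c * ℓ) + 2 * (r * ℓ)) (2 ^ M * q ^ 2 / b) := by
  intro u v huv
  obtain ⟨m, hmr, p, hp, rfl, rfl⟩ := exists_isGeodesicChain hℓ huv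
  obtain ⟨F, hF⟩ := h.exists_isRepairFamily hp.near_succ
  set s := (#(closedBall G (3 * (c * ℓ) + 2 * (r * ℓ)) (p 0)) : ℝ) with hs
  have htotal : ∑ j ∈ Finset.Ico 0 m, (#(closedBall G (c * ℓ) (p j)) : ℝ) ≤
      N ^ M * (q * s / b) :=
    calc ∑ j ∈ Finset.Ico 0 m, (#(closedBall G (c * ℓ) (p j)) : ℝ)
        ≤ (2 * c + 1) * #(tube G (c * ℓ) p (Finset.Ico 0 m)) :=
          mod_cast hp.sum_card_closedBall_le hℓ (by simp)
      _ ≤ (2 * c + 1) * s := by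
          rw [hs]
          gcongr
          intro x hx
          exact closedBall_subset (.refl G 0 _) (by lia)
            (hp.closedBall_subset_of_mem_tube (r := r) (R := 0) (by grind) hx self_mem_closedBall)
      _ = (2 * c + 1) * b / q * (q * s / b) := by field_simp
      _ ≤ N ^ M * (q * s / b) := by gcongr
  obtain ⟨S, hSG, hcard, hsurplus⟩ := hF.exists_repair_of_hasShortcuts hp.isGeodesicSeq
    (hp.hasShortcuts hℓ hmr hF hspan hq hb (by positivity) hsat) hq.le (by positivity) hN M
    m.zero_le le_rfl htotal
  refine ⟨S, hSG, hcard.trans_eq (by ring), hsurplus.of_le ?_⟩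
  set K := r * e + 4 * (t * (c * ℓ)) + 4 * (c * ℓ) + t * ℓ
  calc (m - 0) * e + (2 ^ M - 1) * K ≤ K + (2 ^ M - 1) * K := by
        gcongr
        have := Nat.mul_le_mul_right e hmr
        lia
    _ = 2 ^ M * K := by
        rw [add_comm, ← Nat.succ_mul, Nat.succ_eq_add_one, Nat.sub_add_cancel Nat.one_le_two_pow]

theorem Repairable.exists_lift (h : Repairable G H ℓ e (c * ℓ) q) (hHG : H ≤ G)
    (hspan : Spans G H t) (hℓ : 1 ≤ ℓ) (r : ℕ) (hq : 0 < q) (hb : 0 < b) (hN : 1 ≤ N)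
    (hNM : (2 * c + 1) * b / q ≤ N ^ M) :
    ∃ H', H ≤ H' ∧ H' ≤ G ∧
      (H'.edgeSet.ncard : ℝ) ≤ H.edgeSet.ncard + Fintype.card V * (b * N * (2 * c + 1) ^ 2) ∧
      Repairable G H' (r * ℓ) (2 ^ M * (r * e + 4 * (t * (c * ℓ)) + 4 * (c * ℓ) + t * ℓ))
        (3 * (c * ℓ) + 2 * (r * ℓ)) (2 ^ M * q ^ 2 / b) := by
  obtain ⟨H', hHH', hH'G, hsat, hcard⟩ := exists_isSaturated (β := b * N * (2 * c + 1) ^ 2)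
    (2 * (c * ℓ) + r * ℓ) (r * e + 2 * (t * (c * ℓ)) + 2 * (c * ℓ)) (by positivity) hHG
  exact ⟨H', hHH', hH'G, hcard, (h.mono le_rfl le_rfl hq.le le_rfl hHH').of_isSaturated
    (hspan.mono hHH') hℓ hq hb hN hNM hsat⟩

end Step

section Spanner

theorem exists_adj_forall_near (hG : G.Reachable v x) (hx : x ≠ v) :
    ∃ y, G.Adj y x ∧ ∀ L, Near G (L + 1) v x → Near G L v y := by
  obtain ⟨p, hp⟩ := hG.symm.exists_walk_length_eq_dist
  cases p with
  | nil => exact absurd rfl hx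
  | cons hadj p =>
    refine ⟨_, hadj.symm, fun L hL => ((Near.of_walk p).of_le ?_).symm⟩
    have := hL.symm.dist_le
    rw [SimpleGraph.Walk.length_cons] at hp
    lia

theorem exists_shortestPathTree [Fintype V] (G : SimpleGraph V) (R : ℕ) (v : V) :
    ∃ T ≤ G, T.edgeSet.ncard ≤ #(closedBall G R v) ∧ ∀ x, Near G R v x → Near T R v x := by
  classical
  have hparent : ∀ x, ∃ y, Near G R v x → x ≠ v →
      G.Adj y x ∧ ∀ L, Near G (L + 1) v x → Near G L v y := fun x => by
    by_cases hx : Near G R v x ∧ x ≠ v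
    · obtain ⟨y, hy⟩ := exists_adj_forall_near hx.1.reachable hx.2
      exact ⟨y, fun _ _ => hy⟩
    · exact ⟨x, fun h h' => absurd ⟨h, h'⟩ hx⟩
  choose parent hparent using hparent
  refine ⟨G ⊓ SimpleGraph.fromRel fun x y => Near G R v x ∧ y = parent x, inf_le_left, ?_, ?_⟩
  · refine (ncard_edgeSet_le_sum_card (fun x => if x ∈ closedBall G R v then {parent x} else ∅)
      fun x y hxy => ?_).trans_eq ?_
    · obtain ⟨-, -, ⟨hx, rfl⟩ | ⟨hy, rfl⟩⟩ := hxy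
      · exact .inl (by simp [hx])
      · exact .inr (by simp [hy])
    · simp [apply_ite Finset.card, closedBall]
  · suffices ∀ L ≤ R, ∀ x, Near G L v x → Near _ L v x from this R le_rfl
    intro L hL
    induction L with
    | zero => exact fun x hx => near_zero_iff.2 (near_zero_iff.1 hx)
    | succ L ih =>
      intro x hx
      obtain rfl | hxv := eq_or_ne x v
      · exact .refl _ _ _
      obtain ⟨hadj, hnear⟩ := hparent x (hx.of_le hL) hxv
      refine (ih (by lia) _ (hnear L hx)).trans (.of_adj ?_)
      exact ⟨hadj, hadj.ne, .inr ⟨hx.of_le hL, rfl⟩⟩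

variable [Fintype V] {κ : ℕ} {N : ℝ}

theorem exists_card_closedBall_succ_le (G : SimpleGraph V) (v : V) (hκ : 1 ≤ κ) (hN : 0 ≤ N)
    (hn : Fintype.card V ≤ N ^ κ) :
    ∃ j < κ, (#(closedBall G (j + 1) v) : ℝ) ≤ N * #(closedBall G j v) := by
  by_contra! hgrow
  have hgeom := geom_lt (u := fun j => (#(closedBall G j v) : ℝ)) hN hκ hgrow
  have hpos : (1 : ℝ) ≤ #(closedBall G 0 v) := mod_cast card_closedBall_pos
  have hcard : (#(closedBall G κ v) : ℝ) ≤ Fintype.card V := mod_cast Finset.card_le_univ _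
  have := le_mul_of_one_le_right (pow_nonneg hN κ) hpos
  linarith

-- Remove a ball that grows by a factor at most `N` in its next layer, and keep a shortest-path
-- tree of that next ball: it spans every edge meeting the removed ball.
theorem exists_spans_of_support_subset (hκ : 1 ≤ κ) (hN : 0 ≤ N) (hn : Fintype.card V ≤ N ^ κ)
    (S : Finset V) (hS : G.support ⊆ S) :
    ∃ H ≤ G, (H.edgeSet.ncard : ℝ) ≤ N * #S ∧ Spans G H (2 * κ) := by
  classical
  induction S using Finset.strongInduction generalizing G with
  | H S ih =>
  obtain rfl | ⟨v, hv⟩ := S.eq_empty_or_nonempty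
  · exact ⟨⊥, bot_le, by simp, fun x y hxy => absurd (hS ⟨y, hxy⟩) (by simp)⟩
  obtain ⟨j, hjκ, hgrow⟩ := exists_card_closedBall_succ_le G v hκ hN hn
  obtain ⟨T, hTG, hTcard, hT⟩ := exists_shortestPathTree G (j + 1) v
  set B := closedBall G j v
  have hBS : B ⊆ S := fun x hx => by
    obtain ⟨p, -⟩ := (mem_closedBall.1 hx).symm.exists_walk
    cases p with
    | nil => exact hv
    | cons hadj _ => exact hS ⟨_, hadj⟩
  obtain ⟨H, hHG, hHcard, hH⟩ := ih (S \ B) (Finset.sdiff_ssubset hBS ⟨v, self_mem_closedBall⟩)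
    (G := G \ SimpleGraph.fromRel fun x _ => x ∈ B) fun x ⟨y, hxy, hB⟩ => by
      have hx : x ∉ B := fun hx => hB ⟨hxy.ne, .inl hx⟩
      simpa using ⟨hS ⟨y, hxy⟩, hx⟩
  have htree : ∀ {x y}, G.Adj x y → x ∈ B → Near T (2 * κ) x y := fun {x y} hxy hx => by
    have hvx := mem_closedBall.1 hx
    exact ((hT x (hvx.of_le j.le_succ)).symm.trans (hT y (hvx.trans (.of_adj hxy)))).of_le (by lia)
  refine ⟨H ⊔ T, sup_le (hHG.trans sdiff_le) hTG, ?_, fun x y hxy => ?_⟩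
  · have hsup : ((H ⊔ T).edgeSet.ncard : ℝ) ≤ H.edgeSet.ncard + T.edgeSet.ncard :=
      mod_cast ncard_edgeSet_sup_le H T
    have hcard : (#(S \ B) : ℝ) + #B = #S := mod_cast Finset.card_sdiff_add_card_eq_card hBS
    have hTball : (T.edgeSet.ncard : ℝ) ≤ #(closedBall G (j + 1) v) := mod_cast hTcard
    rw [← hcard, mul_add]
    linarith
  · by_cases hx : x ∈ B
    · exact (htree hxy hx).mono le_sup_right
    by_cases hy : y ∈ B
    · exact (htree hxy.symm hy).symm.mono le_sup_right
    · exact (hH ⟨hxy, fun h => h.2.elim hx hy⟩).mono le_sup_left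

theorem exists_spans (G : SimpleGraph V) (hκ : 1 ≤ κ) (hN : 0 ≤ N)
    (hn : Fintype.card V ≤ N ^ κ) :
    ∃ H ≤ G, (H.edgeSet.ncard : ℝ) ≤ N * Fintype.card V ∧ Spans G H (2 * κ) :=
  exists_spans_of_support_subset hκ hN hn Finset.univ (by simp)

theorem exists_repairable_one (G : SimpleGraph V) {b : ℝ} (hb : 0 < b) :
    ∃ H ≤ G, (H.edgeSet.ncard : ℝ) ≤ Fintype.card V * b ∧ Repairable G H 1 0 1 (1 / b) := by
  classical
  refine ⟨G ⊓ SimpleGraph.fromRel fun x _ => (#(closedBall G 1 x) : ℝ) ≤ b, inf_le_left, ?_, ?_⟩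
  · have hcount := ncard_edgeSet_le_sum_card
      (H := G ⊓ SimpleGraph.fromRel fun x _ => (#(closedBall G 1 x) : ℝ) ≤ b)
      (fun x => if (#(closedBall G 1 x) : ℝ) ≤ b then closedBall G 1 x else ∅) fun x y hxy => by
        obtain ⟨hadj, -, hx | hy⟩ := hxy
        · exact .inl (by simpa [hx] using .of_adj hadj)
        · exact .inr (by simpa [hy] using .of_adj hadj.symm)
    refine (Nat.cast_le.2 hcount).trans ?_
    rw [Nat.cast_sum, ← nsmul_eq_mul]
    refine Finset.sum_le_card_nsmul _ _ _ fun x _ => ?_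
    split_ifs with hx
    · exact hx
    · simpa using hb.le
  · intro u v huv
    obtain huv | ⟨y, hy, hadj⟩ := near_succ_iff.1 huv
    · obtain rfl := near_zero_iff.1 huv
      exact ⟨⊥, bot_le, by simpa using by positivity, .refl _ _ _ _⟩
    obtain rfl := near_zero_iff.1 hy
    by_cases hu : (#(closedBall G 1 u) : ℝ) ≤ b
    · exact ⟨⊥, bot_le, by simpa using by positivity,
        .of_adj (.inl ⟨hadj, hadj.ne, .inl hu⟩)⟩
    · refine ⟨SimpleGraph.edge u v, ?_, ?_, .of_adj (.inr ?_)⟩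
      · exact (SimpleGraph.edge_le_iff G).2 (.inr hadj)
      · rw [one_div, inv_mul_eq_div, le_div_iff₀ hb]
        simpa [SimpleGraph.edgeSet_edge_of_ne hadj.ne] using (not_le.1 hu).le
      · simp [SimpleGraph.edge_adj, hadj.ne]

end Spanner

section Levels

variable [Fintype V] {M r i k : ℕ} {N b : ℝ}

theorem Repairable.surplusLE {ℓ e R : ℕ} {q : ℝ} (h : Repairable G H ℓ e R q) (hq : 0 ≤ q)
    (hqn : q * Fintype.card V < 1) (huv : Near G ℓ u v) : SurplusLE G H e u v := by
  obtain ⟨F, -, hcard, hsurplus⟩ := h huv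
  have hball : (#(closedBall G R u) : ℝ) ≤ Fintype.card V := mod_cast Finset.card_le_univ _
  have hF : (F.edgeSet.ncard : ℝ) < 1 :=
    (hcard.trans (mul_le_mul_of_nonneg_left hball hq)).trans_lt hqn
  have hbot : F = ⊥ := by
    rwa [Nat.cast_lt_one, Set.ncard_eq_zero, SimpleGraph.edgeSet_eq_empty] at hF
  simpa [hbot] using hsurplus

/-- The repair cost per ball vertex at level `i`: the solution of `q₀ = 1 / b` and
`qᵢ₊₁ = 2 ^ M * qᵢ ^ 2 / b`. -/
noncomputable def levelCost (M : ℕ) (b : ℝ) (i : ℕ) : ℝ :=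
  b / 2 ^ M * (2 ^ M / b ^ 2) ^ 2 ^ i

/-- The surplus at level `i`, when distances grow by a factor `r` per level: a closed form that
dominates the recursion of `Repairable.exists_lift`. -/
def levelSurplus (M r i : ℕ) : ℕ :=
  i * (26 * M * 3 ^ i * 2 ^ (M * i) * r ^ (i - 1))

theorem levelCost_pos (hb : 0 < b) : 0 < levelCost M b i := by
  unfold levelCost
  positivity

theorem levelCost_zero (hb : b ≠ 0) : levelCost M b 0 = 1 / b := by
  rw [levelCost, pow_zero, pow_one]
  field_simp

theorem levelCost_succ (hb : b ≠ 0) : levelCost M b (i + 1) = 2 ^ M * levelCost M b i ^ 2 / b := by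
  rw [levelCost, levelCost, pow_succ 2 i, pow_mul]
  field_simp

theorem div_levelCost_le (hb : 0 < b) : b / levelCost M b i ≤ b ^ 2 ^ (i + 1) := by
  have hpow : (2 : ℝ) ^ M ≤ (2 ^ M) ^ 2 ^ i := le_self_pow₀ (one_le_pow₀ one_le_two) (by positivity)
  rw [div_le_iff₀ (levelCost_pos hb)]
  calc b ≤ b * ((2 ^ M) ^ 2 ^ i / 2 ^ M) :=
        le_mul_of_one_le_right hb.le ((one_le_div (by positivity)).2 hpow)
    _ = b ^ 2 ^ (i + 1) * levelCost M b i := by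
        rw [levelCost, div_pow, ← pow_mul b, ← pow_succ' 2 i]
        field_simp

theorem levelSurplus_zero : levelSurplus M r 0 = 0 := by
  simp [levelSurplus]

theorem lift_levelSurplus_le (hM : 1 ≤ M) {c : ℕ} (hc : c ≤ 2 * 3 ^ i) :
    2 ^ M * (r * levelSurplus M r i + 4 * (2 * M * (c * r ^ i)) + 4 * (c * r ^ i) +
      2 * M * r ^ i) ≤ levelSurplus M r (i + 1) := by
  have hr : r * levelSurplus M r i = i * (26 * M * 3 ^ i * 2 ^ (M * i)) * r ^ i := by
    rcases i with _ | i
    · simp [levelSurplus]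
    · rw [levelSurplus, Nat.add_sub_cancel]
      ring
  have hconst : 4 * (2 * M * c) + 4 * c + 2 * M ≤ 26 * M * 3 ^ i := by
    calc 4 * (2 * M * c) + 4 * c + 2 * M
        ≤ 4 * (2 * M * (2 * 3 ^ i)) + 4 * (M * (2 * 3 ^ i)) + 2 * (M * 3 ^ i) := by
          gcongr
          · exact hc.trans (Nat.le_mul_of_pos_left _ hM)
          · exact Nat.le_mul_of_pos_right _ (by positivity)
      _ = 26 * M * 3 ^ i := by ring
  calc _ = 2 ^ M * (i * (26 * M * 3 ^ i * 2 ^ (M * i)) * r ^ i +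
        (4 * (2 * M * c) + 4 * c + 2 * M) * r ^ i) := by rw [hr]; ring
    _ ≤ 2 ^ M * (i * (26 * M * 3 ^ i * 2 ^ (M * i)) * r ^ i +
        26 * M * 3 ^ i * 2 ^ (M * i) * r ^ i) := by
        gcongr
        exact hconst.trans (Nat.le_mul_of_pos_right _ (by positivity))
    _ = (i + 1) * (26 * M * 3 ^ i * 2 ^ (M * (i + 1)) * r ^ i) := by ring
    _ ≤ levelSurplus M r (i + 1) := by
        rw [levelSurplus, Nat.add_sub_cancel]
        gcongr <;> lia

/-- The invariant of the level induction: `H` can serve pairs at distance at most `r ^ i`, with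
`levelSurplus`, at `levelCost` per vertex of a ball of radius `(2 * 3 ^ i - 1) * r ^ i`. -/
structure IsLevelSpanner (G : SimpleGraph V) (M r : ℕ) (N b : ℝ) (i : ℕ) (H : SimpleGraph V) :
    Prop where
  le : H ≤ G
  ncard_le : (H.edgeSet.ncard : ℝ) ≤ Fintype.card V * (b * N * (2 + i * (4 * 3 ^ i) ^ 2))
  spans : Spans G H (2 * M)
  repairable : Repairable G H (r ^ i) (levelSurplus M r i) ((2 * 3 ^ i - 1) * r ^ i)
    (levelCost M b i)

theorem exists_isLevelSpanner_zero (G : SimpleGraph V) (r : ℕ) (hM : 1 ≤ M) (hN : 1 ≤ N)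
    (hb : 1 ≤ b) (hn : Fintype.card V ≤ N ^ M) : ∃ H, IsLevelSpanner G M r N b 0 H := by
  have hb0 : 0 < b := by positivity
  obtain ⟨H₁, hH₁G, hcard₁, hspan⟩ := exists_spans G hM (by positivity) hn
  obtain ⟨H₂, hH₂G, hcard₂, hrep⟩ := exists_repairable_one G hb0
  refine ⟨H₁ ⊔ H₂, sup_le hH₁G hH₂G, ?_, hspan.mono le_sup_left, ?_⟩
  · have hsum : N + b ≤ b * N * 2 := by nlinarith
    calc ((H₁ ⊔ H₂).edgeSet.ncard : ℝ) ≤ H₁.edgeSet.ncard + H₂.edgeSet.ncard :=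
          mod_cast ncard_edgeSet_sup_le H₁ H₂
      _ ≤ Fintype.card V * (N + b) := by linarith
      _ ≤ Fintype.card V * (b * N * 2) := by gcongr
      _ = _ := by simp
  · rw [levelSurplus_zero, levelCost_zero hb0.ne', pow_zero]
    exact hrep.mono le_rfl le_rfl (by positivity) le_rfl le_sup_right

theorem IsLevelSpanner.exists_succ (h : IsLevelSpanner G M r N b i H) (hM : 1 ≤ M) (hr : 1 ≤ r)
    (hN : 1 ≤ N) (hb : 0 < b) (hNM : 4 * 3 ^ i * b ^ 2 ^ (i + 1) ≤ N ^ M) :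
    ∃ H', IsLevelSpanner G M r N b (i + 1) H' := by
  have h3 : 1 ≤ 3 ^ i := Nat.one_le_pow _ _ (by norm_num)
  have hrad : (2 * (2 * 3 ^ i - 1 : ℕ) + 1 : ℝ) ≤ 4 * 3 ^ i := by
    have : 2 * (2 * 3 ^ i - 1) + 1 ≤ 4 * 3 ^ i := by lia
    exact_mod_cast this
  obtain ⟨H', hHH', hH'G, hcard, hrep⟩ := h.repairable.exists_lift (M := M) h.le h.spans
    (Nat.one_le_pow _ _ hr) r (levelCost_pos hb) hb hN <|
      calc _ ≤ 4 * 3 ^ i * (b / levelCost M b i) := by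
            rw [mul_div_assoc]
            have := (levelCost_pos (M := M) (i := i) hb).le
            gcongr
        _ ≤ 4 * 3 ^ i * b ^ 2 ^ (i + 1) := by
            gcongr
            exact div_levelCost_le hb
        _ ≤ N ^ M := hNM
  refine ⟨H', hH'G, ?_, h.spans.mono hHH', ?_⟩
  · calc (H'.edgeSet.ncard : ℝ)
        ≤ Fintype.card V * (b * N * (2 + i * (4 * 3 ^ i) ^ 2)) +
          Fintype.card V * (b * N * (4 * 3 ^ i) ^ 2) := by
          refine hcard.trans (add_le_add h.ncard_le ?_)
          gcongr
      _ = Fintype.card V * (b * N * (2 + (i + 1 : ℕ) * (4 * 3 ^ i) ^ 2)) := by push_cast; ring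
      _ ≤ _ := by
          gcongr
          · norm_num
          · exact i.le_succ
  · rw [pow_succ' r, levelCost_succ hb.ne']
    refine hrep.mono (lift_levelSurplus_le hM (by lia)) ?_
      (by have := levelCost_pos (M := M) (i := i) hb; positivity) le_rfl le_rfl
    have hradius : 2 * 3 ^ (i + 1) - 1 = 3 * (2 * 3 ^ i - 1) + 2 := by
      rw [pow_succ]
      lia
    rw [hradius]
    calc 3 * ((2 * 3 ^ i - 1) * r ^ i) + 2 * (r * r ^ i)
        ≤ 3 * ((2 * 3 ^ i - 1) * (r * r ^ i)) + 2 * (r * r ^ i) := by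
          gcongr
          exact Nat.le_mul_of_pos_left _ hr
      _ = (3 * (2 * 3 ^ i - 1) + 2) * (r * r ^ i) := by ring

theorem exists_isLevelSpanner (G : SimpleGraph V) (hM : 1 ≤ M) (hr : 1 ≤ r) (hN : 1 ≤ N)
    (hb : 1 ≤ b) (hn : Fintype.card V ≤ N ^ M) (hNM : 4 * 3 ^ k * b ^ 2 ^ k ≤ N ^ M) (hi : i ≤ k) :
    ∃ H, IsLevelSpanner G M r N b i H := by
  induction i with
  | zero => exact exists_isLevelSpanner_zero G r hM hN hb hn
  | succ i ih =>
    obtain ⟨H, hH⟩ := ih (by lia)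
    refine hH.exists_succ hM hr hN (by positivity) (le_trans ?_ hNM)
    gcongr
    · norm_num
    · lia
    · norm_num

theorem exists_surplusLE_of_near_pow (G : SimpleGraph V) (hM : 1 ≤ M) (hr : 1 ≤ r) (hN : 1 ≤ N)
    (hb : 1 ≤ b) (hn : Fintype.card V ≤ N ^ M) (hNM : 4 * 3 ^ k * b ^ 2 ^ k ≤ N ^ M)
    (hcost : levelCost M b k * Fintype.card V < 1) :
    ∃ H ≤ G, (H.edgeSet.ncard : ℝ) ≤ Fintype.card V * (b * N * (2 + k * (4 * 3 ^ k) ^ 2)) ∧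
      ∀ ⦃u v⦄, Near G (r ^ k) u v → SurplusLE G H (levelSurplus M r k) u v := by
  obtain ⟨H, hH⟩ := exists_isLevelSpanner G hM hr hN hb hn hNM le_rfl
  exact ⟨H, hH.le, hH.ncard_le, fun u v huv =>
    hH.repairable.surplusLE (levelCost_pos (by positivity)).le hcost huv⟩

end Levels

section Scales

variable {k M : ℕ}

theorem exists_scale {d n : ℕ} (hk : 1 ≤ k) (hd : 1 ≤ d) (hdn : d < n) :
    ∃ j < Nat.log 2 n + 2, d ≤ (2 ^ j) ^ k ∧
      ((2 ^ j : ℝ)) ^ (k - 1) ≤ 2 ^ (k - 1) * (d : ℝ) ^ (1 - 1 / k : ℝ) := by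
  have hk' : (1 : ℝ) ≤ k := mod_cast hk
  have hexp : 0 ≤ (1 - 1 / k : ℝ) := sub_nonneg.2 ((div_le_one (by positivity)).2 hk')
  have hlast : d ≤ (2 ^ (Nat.log 2 n + 1)) ^ k :=
    (hdn.trans (Nat.lt_pow_succ_log_self one_lt_two n)).le.trans (Nat.le_self_pow (by lia) _)
  have hex : ∃ j, d ≤ (2 ^ j) ^ k := ⟨_, hlast⟩
  refine ⟨Nat.find hex, Nat.lt_succ_of_le (Nat.find_min' hex hlast), Nat.find_spec hex, ?_⟩
  rcases hj : Nat.find hex with _ | j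
  · have hd' : (1 : ℝ) ≤ d := mod_cast hd
    simpa using one_le_mul_of_one_le_of_one_le (one_le_pow₀ one_le_two)
      (Real.one_le_rpow hd' hexp)
  · have hmin : ((2 ^ j : ℝ) ^ k) ≤ d := by
      exact_mod_cast (not_le.1 (Nat.find_min hex (m := j) (by lia))).le
    calc ((2 : ℝ) ^ (j + 1)) ^ (k - 1) = 2 ^ (k - 1) * ((2 : ℝ) ^ j) ^ (k - 1) := by
          rw [pow_succ', mul_pow]
      _ = 2 ^ (k - 1) * ((2 ^ j : ℝ) ^ k) ^ (1 - 1 / k : ℝ) := by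
          rw [← Real.rpow_natCast ((2 : ℝ) ^ j) k, ← Real.rpow_mul (by positivity),
            ← Real.rpow_natCast ((2 : ℝ) ^ j) (k - 1), Nat.cast_pred hk]
          field_simp
      _ ≤ _ := by gcongr

/-- `H` is a subgraph of `G` in which vertices connected in `G` at distance `d` remain connected,
at distance at most `d + K * d ^ α`. -/
def IsSublinearSpanner (G H : SimpleGraph V) (K α : ℝ) : Prop :=
  H ≤ G ∧ ∀ u v, G.Reachable u v →
    H.Reachable u v ∧ (H.dist u v : ℝ) ≤ G.dist u v + K * (G.dist u v : ℝ) ^ α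

theorem IsSublinearSpanner.refl (G : SimpleGraph V) {K α : ℝ} (hK : 0 ≤ K) :
    IsSublinearSpanner G G K α :=
  ⟨le_rfl, fun _ _ h => ⟨h, le_add_of_nonneg_right (by positivity)⟩⟩

variable [Fintype V] {N b K : ℝ}

theorem exists_surplusLE_of_scales (G : SimpleGraph V) (J : ℕ) (hM : 1 ≤ M) (hN : 1 ≤ N)
    (hb : 1 ≤ b) (hn : Fintype.card V ≤ N ^ M) (hNM : 4 * 3 ^ k * b ^ 2 ^ k ≤ N ^ M)
    (hcost : levelCost M b k * Fintype.card V < 1) :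
    ∃ H ≤ G,
      (H.edgeSet.ncard : ℝ) ≤ J * (Fintype.card V * (b * N * (2 + k * (4 * 3 ^ k) ^ 2))) ∧
      ∀ j < J, ∀ ⦃u v⦄, Near G ((2 ^ j) ^ k) u v →
        SurplusLE G H (levelSurplus M (2 ^ j) k) u v := by
  choose H hHG hcard hsurplus using fun j : ℕ => exists_surplusLE_of_near_pow G (r := 2 ^ j) hM
    Nat.one_le_two_pow hN hb hn hNM hcost
  refine ⟨(Finset.range J).sup H, Finset.sup_le fun j _ => hHG j, ?_, fun j hj u v huv =>
    (hsurplus j huv).mono (Finset.le_sup (Finset.mem_range.2 hj))⟩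
  calc (((Finset.range J).sup H).edgeSet.ncard : ℝ)
      ≤ ∑ j ∈ Finset.range J, ((H j).edgeSet.ncard : ℝ) :=
        mod_cast ncard_edgeSet_finset_sup_le _ _
    _ ≤ _ := by simpa using Finset.sum_le_card_nsmul (Finset.range J) _ _ fun j _ => hcard j

theorem isSublinearSpanner_of_scales (hHG : H ≤ G) (hk : 1 ≤ k)
    (h : ∀ j < Nat.log 2 (Fintype.card V) + 2, ∀ ⦃u v⦄, Near G ((2 ^ j) ^ k) u v →
      SurplusLE G H (levelSurplus M (2 ^ j) k) u v)
    (hK : k * (26 * M * 3 ^ k * 2 ^ (M * k)) * 2 ^ (k - 1) ≤ K) :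
    IsSublinearSpanner G H K (1 - 1 / k) := by
  refine ⟨hHG, fun u v huv => ?_⟩
  obtain hzero | hpos := Nat.eq_zero_or_pos (G.dist u v)
  · obtain rfl := huv.dist_eq_zero_iff.1 hzero
    have : 0 ≤ K := le_trans (by positivity) hK
    exact ⟨.refl u, by simpa using by positivity⟩
  obtain ⟨p, hp, hlen⟩ := huv.exists_path_of_dist
  obtain ⟨j, hj, hdj, hjd⟩ := exists_scale hk hpos (hlen ▸ hp.length_lt)
  have hnear := (h j hj ((near_dist huv).of_le hdj)).near (near_dist huv)
  refine ⟨hnear.reachable, ?_⟩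
  calc (H.dist u v : ℝ) ≤ G.dist u v + levelSurplus M (2 ^ j) k := mod_cast hnear.dist_le
    _ = G.dist u v + k * (26 * M * 3 ^ k * 2 ^ (M * k)) * (2 ^ j) ^ (k - 1) := by
        rw [levelSurplus]
        push_cast
        ring
    _ ≤ G.dist u v + k * (26 * M * 3 ^ k * 2 ^ (M * k)) *
        (2 ^ (k - 1) * (G.dist u v : ℝ) ^ (1 - 1 / k : ℝ)) := by gcongr
    _ ≤ G.dist u v + K * (G.dist u v : ℝ) ^ (1 - 1 / k : ℝ) := by
        rw [← mul_assoc]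
        gcongr

end Scales

section Parameters

variable {ε x : ℝ} {k M : ℕ}

theorem natCast_rpow_le_rpow (n : ℕ) {y : ℝ} (hx : 0 < x) (hxy : x ≤ y) :
    (n : ℝ) ^ x ≤ (n : ℝ) ^ y := by
  obtain rfl | hn := n.eq_zero_or_pos
  · simp [hx.ne', (hx.trans_le hxy).ne']
  · exact Real.rpow_le_rpow_of_exponent_le (mod_cast hn) hxy

theorem levelConstant_le_two_pow (hk : 1 ≤ k) :
    k * (26 * M * 3 ^ k * 2 ^ (M * k)) * 2 ^ (k - 1) ≤ 2 ^ (k * (2 * M + 8)) :=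
  calc k * (26 * M * 3 ^ k * 2 ^ (M * k)) * 2 ^ (k - 1)
      ≤ 2 ^ k * (2 ^ 5 * 2 ^ M * (2 ^ 2) ^ k * 2 ^ (M * k)) * 2 ^ (k - 1) := by
        gcongr
        · exact Nat.lt_two_pow_self.le
        · norm_num
        · exact Nat.lt_two_pow_self.le
        · norm_num
    _ = 2 ^ (k + (5 + M + 2 * k + M * k) + (k - 1)) := by rw [← pow_mul]; simp only [← pow_add]
    _ ≤ 2 ^ (k * (2 * M + 8)) := by
        have := Nat.le_mul_of_pos_left M hk
        gcongr
        · norm_num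
        · lia

theorem levelConstant_le (hε : 0 < ε) (hε' : ε < 1 / 2) (hk : 1 ≤ k) (hM : (M : ℝ) ≤ 2 / ε + 1) :
    (k * (26 * M * 3 ^ k * 2 ^ (M * k)) * 2 ^ (k - 1) : ℝ) ≤ 2 ^ (30 * k / ε) := by
  have hinv : 2 < ε⁻¹ := by rwa [lt_inv_comm₀ two_pos hε, ← one_div]
  rw [div_eq_mul_inv] at hM
  calc (k * (26 * M * 3 ^ k * 2 ^ (M * k)) * 2 ^ (k - 1) : ℝ) ≤ 2 ^ (k * (2 * M + 8)) :=
        mod_cast levelConstant_le_two_pow hk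
    _ = (2 : ℝ) ^ (k * (2 * M + 8) : ℝ) := by rw [← Real.rpow_natCast]; push_cast; rfl
    _ ≤ 2 ^ (k * (30 * ε⁻¹)) := by
        gcongr
        · norm_num
        · linarith
    _ = 2 ^ (30 * k / ε) := by ring_nf

theorem log_two_add_two_le {n : ℕ} (hε : 0 < ε) (hn : 1 ≤ n) :
    (Nat.log 2 n + 2 : ℝ) ≤ (2 / ε + 2) * (n : ℝ) ^ ε := by
  have hone : 1 ≤ (n : ℝ) ^ ε := Real.one_le_rpow (mod_cast hn) hε.le
  have hlog : (Nat.log 2 n : ℝ) * Real.log 2 ≤ (n : ℝ) ^ ε / ε :=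
    calc (Nat.log 2 n : ℝ) * Real.log 2 = Real.log (2 ^ Nat.log 2 n) := by rw [Real.log_pow]
      _ ≤ Real.log n :=
          Real.log_le_log (by positivity) (mod_cast Nat.pow_log_le_self 2 (by lia))
      _ ≤ (n : ℝ) ^ ε / ε := Real.log_le_rpow_div n.cast_nonneg hε
  have hlog₂ : (Nat.log 2 n : ℝ) ≤ 2 * (Nat.log 2 n * Real.log 2) := by
    have := mul_le_mul_of_nonneg_left Real.log_two_gt_d9.le (Nat.log 2 n).cast_nonneg (α := ℝ)
    linarith
  calc (Nat.log 2 n + 2 : ℝ) ≤ 2 * ((n : ℝ) ^ ε / ε) + 2 * (n : ℝ) ^ ε := by linarith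
    _ = (2 / ε + 2) * (n : ℝ) ^ ε := by ring

/-- The parameter `b` for graphs on `x` vertices. With `1 / (2 ^ (k + 1) - 1)` alone as exponent,
`b ^ 2 ^ (k + 1) = x * b` makes `levelCost M b k` equal to `1 / x` up to powers of `2 ^ M`; the term
`ε / 2 ^ k` absorbs those. -/
noncomputable def levelBase (ε : ℝ) (k : ℕ) (x : ℝ) : ℝ :=
  x ^ (1 / (2 ^ (k + 1) - 1) + ε / 2 ^ k : ℝ)

theorem two_pow_le_two_pow_succ_sub_one (k : ℕ) : (2 : ℝ) ^ k ≤ 2 ^ (k + 1) - 1 := by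
  have : (1 : ℝ) ≤ 2 ^ k := one_le_pow₀ one_le_two
  rw [pow_succ]
  linarith

theorem two_pow_succ_sub_one_pos (k : ℕ) : (0 : ℝ) < 2 ^ (k + 1) - 1 :=
  lt_of_lt_of_le (by positivity) (two_pow_le_two_pow_succ_sub_one k)

theorem levelBase_pow (hx : 0 ≤ x) (m : ℕ) :
    levelBase ε k x ^ m = x ^ ((1 / (2 ^ (k + 1) - 1) + ε / 2 ^ k) * m : ℝ) := by
  rw [levelBase, ← Real.rpow_natCast, ← Real.rpow_mul hx]

theorem one_le_levelBase (hε : 0 ≤ ε) (hx : 1 ≤ x) : 1 ≤ levelBase ε k x := by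
  have := two_pow_succ_sub_one_pos k
  exact Real.one_le_rpow hx (by positivity)

theorem sq_le_rpow_pow (hε : 0 < ε) (hx : 1 ≤ x) (hM : 2 / ε ≤ M) : x ^ 2 ≤ (x ^ ε) ^ M := by
  rw [← Real.rpow_natCast (x ^ ε), ← Real.rpow_mul (by positivity), ← Real.rpow_two]
  gcongr
  rwa [div_le_iff₀' hε] at hM

theorem mul_levelBase_pow_le (hε : ε ≤ 1 / 2) (hx : 16 * 9 ^ k ≤ x) :
    4 * 3 ^ k * levelBase ε k x ^ 2 ^ k ≤ x ^ 2 := by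
  have hx₁ : 1 ≤ x := by
    have : (1 : ℝ) ≤ 9 ^ k := one_le_pow₀ (by norm_num)
    linarith
  have hexp : (1 / (2 ^ (k + 1) - 1) + ε / 2 ^ k) * (2 ^ k : ℕ) ≤ (3 / 2 : ℝ) := by
    have : (2 : ℝ) ^ k / (2 ^ (k + 1) - 1) ≤ 1 :=
      (div_le_one (two_pow_succ_sub_one_pos k)).2 (two_pow_le_two_pow_succ_sub_one k)
    have hsplit : (1 / (2 ^ (k + 1) - 1) + ε / 2 ^ k) * (2 ^ k : ℕ) =
        (2 : ℝ) ^ k / (2 ^ (k + 1) - 1) + ε := by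
      push_cast
      field_simp
    linarith
  calc 4 * 3 ^ k * levelBase ε k x ^ 2 ^ k ≤ x ^ (1 / 2 : ℝ) * x ^ (3 / 2 : ℝ) := by
        rw [levelBase_pow (by positivity)]
        gcongr
        · rw [← Real.sqrt_eq_rpow]
          refine Real.le_sqrt_of_sq_le (le_of_eq_of_le ?_ hx)
          rw [mul_pow, ← pow_mul, mul_comm k, pow_mul]
          norm_num
    _ = x ^ 2 := by rw [← Real.rpow_add (by positivity)]; norm_num

theorem levelBase_mul_le (hε : 0 ≤ ε) (hx : 1 ≤ x) :
    levelBase ε k x * (x ^ ε * x) ≤ levelBase ε k x ^ 2 ^ (k + 1) := by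
  have hx₀ : 0 < x := by positivity
  have hm := two_pow_succ_sub_one_pos k
  have hgain : ε ≤ ε / 2 ^ k * (2 ^ (k + 1) - 1) := by
    rw [div_mul_eq_mul_div, le_div_iff₀ (by positivity)]
    gcongr
    exact two_pow_le_two_pow_succ_sub_one k
  rw [levelBase_pow hx₀.le, levelBase, ← Real.rpow_add_one hx₀.ne', ← Real.rpow_add hx₀]
  gcongr
  have hsplit : (1 / (2 ^ (k + 1) - 1) + ε / 2 ^ k) * (2 ^ (k + 1) : ℕ) =
      1 / (2 ^ (k + 1) - 1) + ε / 2 ^ k + (1 + ε / 2 ^ k * (2 ^ (k + 1) - 1)) := by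
    push_cast
    field_simp
    ring
  linarith

theorem levelCost_levelBase_mul_lt_one (hε : 0 ≤ ε) (hx : 1 ≤ x)
    (hxM : 2 ^ (M * 2 ^ k) < x ^ ε) : levelCost M (levelBase ε k x) k * x < 1 := by
  have hb : 0 < levelBase ε k x := zero_lt_one.trans_le (one_le_levelBase hε hx)
  set b := levelBase ε k x with hb_def
  calc levelCost M b k * x ≤ b * (2 ^ M / b ^ 2) ^ 2 ^ k * x := by
        rw [levelCost]
        gcongr
        exact div_le_self hb.le (one_le_pow₀ one_le_two)
    _ = 2 ^ (M * 2 ^ k) * (b * x) / b ^ 2 ^ (k + 1) := by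
        rw [div_pow, ← pow_mul, ← pow_mul, ← pow_succ']
        ring
    _ < x ^ ε * (b * x) / b ^ 2 ^ (k + 1) := by gcongr
    _ ≤ 1 := by
        rw [div_le_one (by positivity), hb_def]
        exact le_of_eq_of_le (by ring) (levelBase_mul_le hε hx)

end Parameters

section Main

variable {ε : ℝ} {k : ℕ}

theorem rpow_mul_levelBase_le {x : ℝ} (hε : 0 ≤ ε) (hx : 1 ≤ x) :
    x ^ ε * (x * (levelBase ε k x * x ^ ε)) ≤ x ^ (1 + 3 * ε + 1 / (2 ^ (k + 1) - 1) : ℝ) := by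
  have hx₀ : 0 < x := by positivity
  have hdiv : ε / 2 ^ k ≤ ε := div_le_self hε (one_le_pow₀ one_le_two)
  calc x ^ ε * (x * (levelBase ε k x * x ^ ε))
      = x ^ (ε + (1 + (1 / (2 ^ (k + 1) - 1) + ε / 2 ^ k + ε)) : ℝ) := by
        rw [levelBase, Real.rpow_add hx₀ ε, Real.rpow_add hx₀ 1, Real.rpow_one,
          Real.rpow_add hx₀ _ ε]
    _ ≤ x ^ (1 + 3 * ε + 1 / (2 ^ (k + 1) - 1) : ℝ) :=
        Real.rpow_le_rpow_of_exponent_le hx (by linarith)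

variable [Fintype V]

theorem exists_isSublinearSpanner_of_large (G : SimpleGraph V) (hε : 0 < ε) (hε' : ε < 1 / 2)
    (hk : 1 ≤ k) (hn : (16 * 9 ^ k : ℝ) ≤ Fintype.card V)
    (hnM : (2 : ℝ) ^ (⌈2 / ε⌉₊ * 2 ^ k) < (Fintype.card V : ℝ) ^ ε) :
    ∃ H, IsSublinearSpanner G H (2 ^ (30 * k / ε)) (1 - 1 / k) ∧
      (H.edgeSet.ncard : ℝ) ≤ (2 / ε + 2) * (2 + k * (4 * 3 ^ k) ^ 2) *
        (Fintype.card V : ℝ) ^ (1 + 3 * ε + 1 / (2 ^ (k + 1) - 1) : ℝ) := by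
  set n := Fintype.card V
  have hn₁ : (1 : ℝ) ≤ n := by
    have : (1 : ℝ) ≤ 9 ^ k := one_le_pow₀ (by norm_num)
    linarith
  have hsq := sq_le_rpow_pow hε hn₁ (Nat.le_ceil (2 / ε))
  have hb := one_le_levelBase (k := k) hε.le hn₁
  obtain ⟨H, hHG, hcard, hsurplus⟩ := exists_surplusLE_of_scales G (Nat.log 2 n + 2)
    (Nat.one_le_ceil_iff.2 (by positivity)) (Real.one_le_rpow hn₁ hε.le) hb
    ((le_self_pow₀ hn₁ two_ne_zero).trans hsq) ((mul_levelBase_pow_le hε'.le hn).trans hsq)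
    (levelCost_levelBase_mul_lt_one hε.le hn₁ hnM)
  refine ⟨H, isSublinearSpanner_of_scales hHG hk hsurplus
    (levelConstant_le hε hε' hk (Nat.ceil_lt_add_one (by positivity)).le), ?_⟩
  calc (H.edgeSet.ncard : ℝ) ≤ (2 / ε + 2) * (n : ℝ) ^ ε *
        (n * (levelBase ε k n * (n : ℝ) ^ ε * (2 + k * (4 * 3 ^ k) ^ 2))) := by
        refine hcard.trans ?_
        push_cast
        gcongr
        exact log_two_add_two_le hε (mod_cast hn₁)
    _ = (2 / ε + 2) * (2 + k * (4 * 3 ^ k) ^ 2) *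
        ((n : ℝ) ^ ε * (n * (levelBase ε k n * (n : ℝ) ^ ε))) := by ring
    _ ≤ _ := by
        gcongr
        exact rpow_mul_levelBase_le hε.le hn₁

theorem ncard_edgeSet_le_mul_rpow (G : SimpleGraph V) {C s : ℝ} (hC : Fintype.card V ≤ C)
    (hs : 1 ≤ s) : (G.edgeSet.ncard : ℝ) ≤ C * (Fintype.card V : ℝ) ^ s :=
  calc (G.edgeSet.ncard : ℝ) ≤ Fintype.card V * (Fintype.card V : ℝ) ^ (1 : ℝ) := by
        rw [Real.rpow_one, ← sq]
        exact_mod_cast ncard_edgeSet_le_sq G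
    _ ≤ C * (Fintype.card V : ℝ) ^ s :=
        mul_le_mul hC (natCast_rpow_le_rpow _ one_pos hs) (by positivity)
          ((Nat.cast_nonneg _).trans hC)

theorem ncard_edgeSet_le_rpow (G : SimpleGraph V) {s : ℝ} (hs : 2 ≤ s) :
    (G.edgeSet.ncard : ℝ) ≤ (Fintype.card V : ℝ) ^ s :=
  calc (G.edgeSet.ncard : ℝ) ≤ (Fintype.card V : ℝ) ^ (2 : ℝ) := by
        rw [Real.rpow_two]
        exact_mod_cast ncard_edgeSet_le_sq G
    _ ≤ (Fintype.card V : ℝ) ^ s := natCast_rpow_le_rpow _ two_pos hs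

open Filter in
theorem eventually_large (hε : 0 < ε) (A B : ℝ) :
    ∀ᶠ n : ℕ in atTop, A ≤ n ∧ B < (n : ℝ) ^ ε :=
  (tendsto_natCast_atTop_atTop.eventually_ge_atTop A).and
    (((tendsto_rpow_atTop hε).comp tendsto_natCast_atTop_atTop).eventually_gt_atTop B)

end Main

end SublinearSpanner

open SublinearSpanner in
theorem sublinear_additive_spanner_eps_general (ε : ℝ) (hε : 0 < ε) (k : ℕ) (hk : 1 ≤ k) :
    ∃ C : ℝ, 0 < C ∧ ∀ (V : Type*) [Fintype V] (G : SimpleGraph V), ∃ H : SimpleGraph V,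
      IsSublinearSpanner G H (2 ^ (30 * k / ε : ℝ)) (1 - 1 / k) ∧
      (H.edgeSet.ncard : ℝ) ≤
        C * (Fintype.card V : ℝ) ^ (1 + 3 * ε + 1 / (2 ^ (k + 1) - 1) : ℝ) := by
  have hν : (0 : ℝ) < 1 / (2 ^ (k + 1) - 1) := one_div_pos.2 (two_pow_succ_sub_one_pos k)
  obtain hε' | hε' := le_or_gt (1 / 2) ε
  · refine ⟨1, one_pos, fun V _ G => ⟨G, .refl G (by positivity), ?_⟩⟩
    rw [one_mul]
    exact ncard_edgeSet_le_rpow G (by linarith)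
  obtain ⟨n₀, hn₀⟩ := Filter.eventually_atTop.1
    (eventually_large hε (16 * 9 ^ k) (2 ^ (⌈2 / ε⌉₊ * 2 ^ k)))
  refine ⟨n₀ + (2 / ε + 2) * (2 + k * (4 * 3 ^ k) ^ 2), by positivity, fun V _ G => ?_⟩
  obtain hlarge | hsmall := le_total n₀ (Fintype.card V)
  · obtain ⟨hn, hnM⟩ := hn₀ _ hlarge
    obtain ⟨H, hH, hcard⟩ := exists_isSublinearSpanner_of_large G hε hε' hk hn hnM
    exact ⟨H, hH, hcard.trans (by gcongr; exact le_add_of_nonneg_left n₀.cast_nonneg)⟩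
  · refine ⟨G, .refl G (by positivity), ncard_edgeSet_le_mul_rpow G ?_ (by linarith)⟩
    exact le_add_of_le_of_nonneg (mod_cast hsmall) (by positivity)

/-- For every `ε > 0` and integer `k ≥ 1`, there is a constant `C` (depending
only on `ε` and `k`) such that every finite simple graph `G` on `n` vertices
has a subgraph `H ⊆ G` with at most `C · n^(1 + 10kε + 1/(2^(k+1) − 1))` edges,
such that for every pair of vertices connected in `G`,
`dist_H(u,v) ≤ dist_G(u,v) + 2^(30k/ε) · dist_G(u,v)^(1 − 1/k)`. -/
theorem sublinear_additive_spanner_eps (ε : ℝ) (hε : 0 < ε) (k : ℕ) (hk : 1 ≤ k) :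
    ∃ C : ℝ, 0 < C ∧
      ∀ (V : Type) [Fintype V] (G : SimpleGraph V),
        ∃ H : SimpleGraph V, H ≤ G ∧
          (H.edgeSet.ncard : ℝ) ≤
            C * (Fintype.card V : ℝ) ^
              ((1 : ℝ) + 10 * (k : ℝ) * ε + 1 / (2 ^ (k + 1) - 1)) ∧
          ∀ u v : V, G.Reachable u v →
            H.Reachable u v ∧
            (H.dist u v : ℝ) ≤ (G.dist u v : ℝ) +
              (2 : ℝ) ^ ((30 * (k : ℝ)) / ε) *
                (G.dist u v : ℝ) ^ ((1 : ℝ) - 1 / (k : ℝ)) := by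
  obtain ⟨C, hC, h⟩ := sublinear_additive_spanner_eps_general ε hε k hk
  refine ⟨C, hC, fun V _ G => ?_⟩
  obtain ⟨H, ⟨hHG, hdist⟩, hcard⟩ := h V G
  have hν := one_div_pos.2 (SublinearSpanner.two_pow_succ_sub_one_pos k)
  have hkε : ε ≤ k * ε := le_mul_of_one_le_left hε.le (mod_cast hk)
  exact ⟨H, hHG, hcard.trans (mul_le_mul_of_nonneg_left
    (SublinearSpanner.natCast_rpow_le_rpow _ (by positivity) (by linarith)) hC.le), hdist⟩
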